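/- Given a P/T Petri net N = (S, A, T) and two markings m1, m2, if m1 ~p m2 (m1 and m2 are place bisimilar), then m1 ~sp m2 (m1 and m2 are structure-preserving bisimilar). -/

import Mathlib

/-- A transition of a P/T net: a triple (pre-set, label, post-set). -/
structure PNTrans (S A : Type) where
  pre : Multiset S
  label : A
  post : Multiset S
deriving DecidableEq

/-- A P/T Petri net over places `S` and labels `A`: a finite set of transitions,
each with a nonempty pre-set. -/
structure PetriNet (S A : Type) [DecidableEq S] [DecidableEq A] where
  T : Finset (PNTrans S A)
  pre_ne : ∀ t ∈ T, t.pre ≠ 0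

/-- The additive closure `R⊕` of a place relation `R`: the least relation on markings
containing `(θ, θ)` and closed under adding `R`-related places on both sides. -/
inductive AddClosure {S : Type} (R : S → S → Prop) : Multiset S → Multiset S → Prop
  | zero : AddClosure R 0 0
  | cons {s1 s2 : S} {m1 m2 : Multiset S} :
      R s1 s2 → AddClosure R m1 m2 → AddClosure R (s1 ::ₘ m1) (s2 ::ₘ m2)

/-- `Fires N m t m'` : transition `t` of `N` is enabled at marking `m` and its firing
produces `m' = (m ⊖ pre(t)) ⊕ post(t)`. -/
def Fires {S A : Type} [DecidableEq S] [DecidableEq A]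
    (N : PetriNet S A) (m : Multiset S) (t : PNTrans S A) (m' : Multiset S) : Prop :=
  t ∈ N.T ∧ t.pre ≤ m ∧ m' = m - t.pre + t.post

/-- A place bisimulation on `N`. -/
def IsPlaceBisim {S A : Type} [DecidableEq S] [DecidableEq A]
    (N : PetriNet S A) (R : S → S → Prop) : Prop :=
  ∀ m1 m2, AddClosure R m1 m2 →
    (∀ t1 m1', Fires N m1 t1 m1' →
      ∃ t2 m2', Fires N m2 t2 m2' ∧ AddClosure R t1.pre t2.pre ∧
        t1.label = t2.label ∧ AddClosure R t1.post t2.post ∧ AddClosure R m1' m2') ∧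
    (∀ t2 m2', Fires N m2 t2 m2' →
      ∃ t1 m1', Fires N m1 t1 m1' ∧ AddClosure R t1.pre t2.pre ∧
        t1.label = t2.label ∧ AddClosure R t1.post t2.post ∧ AddClosure R m1' m2')

/-- Place bisimilarity `m1 ~p m2`. -/
def PlaceBisimilar {S A : Type} [DecidableEq S] [DecidableEq A]
    (N : PetriNet S A) (m1 m2 : Multiset S) : Prop :=
  ∃ R : S → S → Prop, IsPlaceBisim N R ∧ AddClosure R m1 m2

/-- An interleaving bisimulation on the markings of `N`. -/
def IsIntBisim {S A : Type} [DecidableEq S] [DecidableEq A]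
    (N : PetriNet S A) (Q : Multiset S → Multiset S → Prop) : Prop :=
  ∀ m1 m2, Q m1 m2 →
    (∀ t1 m1', Fires N m1 t1 m1' →
      ∃ t2 m2', Fires N m2 t2 m2' ∧ t1.label = t2.label ∧ Q m1' m2') ∧
    (∀ t2 m2', Fires N m2 t2 m2' →
      ∃ t1 m1', Fires N m1 t1 m1' ∧ t1.label = t2.label ∧ Q m1' m2')

/-- Interleaving bisimilarity `m1 ~int m2`. -/
def IntBisimilar {S A : Type} [DecidableEq S] [DecidableEq A]
    (N : PetriNet S A) (m1 m2 : Multiset S) : Prop :=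
  ∃ Q, IsIntBisim N Q ∧ Q m1 m2

/-- First projection of a linking. -/
def lproj1 {S : Type} (l : Multiset (S × S)) : Multiset S := l.map Prod.fst

/-- Second projection of a linking. -/
def lproj2 {S : Type} (l : Multiset (S × S)) : Multiset S := l.map Prod.snd

/-- A structure-preserving bisimulation on `N`: a set of linkings. -/
def IsSpBisim {S A : Type} [DecidableEq S] [DecidableEq A]
    (N : PetriNet S A) (R : Set (Multiset (S × S))) : Prop :=
  ∀ l ∈ R, ∀ c ≤ l,
    (∀ t1 ∈ N.T, t1.pre = lproj1 c →
      ∃ t2 ∈ N.T, t1.label = t2.label ∧ t2.pre = lproj2 c ∧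
        ∃ cb : Multiset (S × S), t1.post = lproj1 cb ∧ t2.post = lproj2 cb ∧
          l - c + cb ∈ R) ∧
    (∀ t2 ∈ N.T, t2.pre = lproj2 c →
      ∃ t1 ∈ N.T, t1.label = t2.label ∧ t1.pre = lproj1 c ∧
        ∃ cb : Multiset (S × S), t1.post = lproj1 cb ∧ t2.post = lproj2 cb ∧
          l - c + cb ∈ R)

/-- Structure-preserving bisimilarity `m1 ~sp m2`. -/
def SpBisimilar {S A : Type} [DecidableEq S] [DecidableEq A]
    (N : PetriNet S A) (m1 m2 : Multiset S) : Prop :=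
  ∃ (R : Set (Multiset (S × S))) (l : Multiset (S × S)),
    IsSpBisim N R ∧ l ∈ R ∧ lproj1 l = m1 ∧ lproj2 l = m2

/-!
Let `R` be a place bisimulation. The set of all linkings made of `R`-related pairs is a
structure-preserving bisimulation: a transition whose pre-set is the first projection of a
sublinking `c` is answered at the marking `lproj2 c` by a transition whose pre-set has the same
size as `c`, so the answer consumes exactly `lproj2 c`.
-/

/-- The linkings over a place relation `R`, i.e. those all of whose links are pairs of `R`: the
witnesses for the additive closure `R⊕`. -/
def linkingsOf {S : Type} (R : S → S → Prop) : Set (Multiset (S × S)) :=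
  {l | ∀ p ∈ l, R p.1 p.2}

section AddClosure

variable {S : Type} {R : S → S → Prop} {m1 m2 : Multiset S}

theorem addClosure_iff_rel : AddClosure R m1 m2 ↔ Multiset.Rel R m1 m2 := by
  constructor
  · intro h
    induction h with
    | zero => exact .zero
    | cons hs _ ih => exact .cons hs ih
  · intro h
    induction h with
    | zero => exact .zero
    | cons hs _ ih => exact .cons hs ih

theorem AddClosure.card_eq (h : AddClosure R m1 m2) : m1.card = m2.card :=
  Multiset.card_eq_card_of_rel (addClosure_iff_rel.1 h)

theorem addClosure_flip : AddClosure (flip R) m1 m2 ↔ AddClosure R m2 m1 := by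
  rw [addClosure_iff_rel, addClosure_iff_rel, Multiset.rel_flip]

theorem AddClosure.exists_linking (h : AddClosure R m1 m2) :
    ∃ l ∈ linkingsOf R, lproj1 l = m1 ∧ lproj2 l = m2 := by
  induction h with
  | zero => exact ⟨0, fun _ hp => absurd hp (Multiset.notMem_zero _), rfl, rfl⟩
  | @cons s1 s2 _ _ hs _ ih =>
    obtain ⟨l, hl, rfl, rfl⟩ := ih
    exact ⟨(s1, s2) ::ₘ l, Multiset.forall_mem_cons.2 ⟨hs, hl⟩,
      Multiset.map_cons _ _ _, Multiset.map_cons _ _ _⟩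

end AddClosure

section Linking

variable {S : Type} {R : S → S → Prop} {l c cb : Multiset (S × S)}

theorem addClosure_lproj_of_mem_linkingsOf (hl : l ∈ linkingsOf R) :
    AddClosure R (lproj1 l) (lproj2 l) :=
  addClosure_iff_rel.2 (Multiset.rel_map.2 (Multiset.rel_refl_of_refl_on hl))

theorem mem_linkingsOf_of_le (hl : l ∈ linkingsOf R) (hc : c ≤ l) : c ∈ linkingsOf R :=
  fun p hp => hl p (Multiset.mem_of_le hc hp)

theorem add_mem_linkingsOf (hl : l ∈ linkingsOf R) (hc : c ∈ linkingsOf R) :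
    l + c ∈ linkingsOf R :=
  fun p hp => (Multiset.mem_add.1 hp).elim (hl p) (hc p)

theorem sub_add_mem_linkingsOf [DecidableEq S] (hl : l ∈ linkingsOf R)
    (hcb : cb ∈ linkingsOf R) : l - c + cb ∈ linkingsOf R :=
  add_mem_linkingsOf (mem_linkingsOf_of_le hl (Multiset.sub_le_self l c)) hcb

end Linking

namespace IsPlaceBisim

variable {S A : Type} [DecidableEq S] [DecidableEq A] {N : PetriNet S A} {R : S → S → Prop}

theorem flip (hR : IsPlaceBisim N R) : IsPlaceBisim N (flip R) := by
  intro m1 m2 hm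
  obtain ⟨hforth, hback⟩ := hR m2 m1 (addClosure_flip.1 hm)
  constructor
  · intro t1 m1' hfire
    obtain ⟨t2, m2', hfire', hpre, hlabel, hpost, hm'⟩ := hback t1 m1' hfire
    exact ⟨t2, m2', hfire', addClosure_flip.2 hpre, hlabel.symm, addClosure_flip.2 hpost,
      addClosure_flip.2 hm'⟩
  · intro t2 m2' hfire
    obtain ⟨t1, m1', hfire', hpre, hlabel, hpost, hm'⟩ := hforth t2 m2' hfire
    exact ⟨t1, m1', hfire', addClosure_flip.2 hpre, hlabel.symm, addClosure_flip.2 hpost,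
      addClosure_flip.2 hm'⟩

theorem exists_right_of_pre (hR : IsPlaceBisim N R) {t1 : PNTrans S A} {m2 : Multiset S}
    (ht1 : t1 ∈ N.T) (hm : AddClosure R t1.pre m2) :
    ∃ t2 ∈ N.T, t1.label = t2.label ∧ t2.pre = m2 ∧ AddClosure R t1.post t2.post := by
  obtain ⟨t2, _, ⟨ht2, hle, -⟩, hpre, hlabel, hpost, -⟩ :=
    (hR _ _ hm).1 t1 _ ⟨ht1, le_rfl, rfl⟩
  have hcard : m2.card = t2.pre.card := hm.card_eq.symm.trans hpre.card_eq
  exact ⟨t2, ht2, hlabel, Multiset.eq_of_le_of_card_le hle hcard.le, hpost⟩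

theorem exists_left_of_pre (hR : IsPlaceBisim N R) {t2 : PNTrans S A} {m1 : Multiset S}
    (ht2 : t2 ∈ N.T) (hm : AddClosure R m1 t2.pre) :
    ∃ t1 ∈ N.T, t1.label = t2.label ∧ t1.pre = m1 ∧ AddClosure R t1.post t2.post := by
  obtain ⟨t1, ht1, hlabel, hpre, hpost⟩ :=
    hR.flip.exists_right_of_pre ht2 (addClosure_flip.2 hm)
  exact ⟨t1, ht1, hlabel.symm, hpre, addClosure_flip.1 hpost⟩

theorem isSpBisim_linkingsOf (hR : IsPlaceBisim N R) : IsSpBisim N (linkingsOf R) := by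
  intro l hl c hc
  have hproj : AddClosure R (lproj1 c) (lproj2 c) :=
    addClosure_lproj_of_mem_linkingsOf (mem_linkingsOf_of_le hl hc)
  constructor
  · intro t1 ht1 hpre1
    obtain ⟨t2, ht2, hlabel, hpre2, hpost⟩ := hR.exists_right_of_pre ht1 (hpre1 ▸ hproj)
    obtain ⟨cb, hcb, hcb1, hcb2⟩ := hpost.exists_linking
    exact ⟨t2, ht2, hlabel, hpre2, cb, hcb1.symm, hcb2.symm, sub_add_mem_linkingsOf hl hcb⟩
  · intro t2 ht2 hpre2
    obtain ⟨t1, ht1, hlabel, hpre1, hpost⟩ := hR.exists_left_of_pre ht2 (hpre2 ▸ hproj)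
    obtain ⟨cb, hcb, hcb1, hcb2⟩ := hpost.exists_linking
    exact ⟨t1, ht1, hlabel, hpre1, cb, hcb1.symm, hcb2.symm, sub_add_mem_linkingsOf hl hcb⟩

end IsPlaceBisim

theorem placeBisimilar_spBisimilar_general {S A : Type} [DecidableEq S] [DecidableEq A]
    (N : PetriNet S A) (m1 m2 : Multiset S) (h : PlaceBisimilar N m1 m2) :
    SpBisimilar N m1 m2 := by
  obtain ⟨R, hR, hm⟩ := h
  obtain ⟨l, hl, hl1, hl2⟩ := hm.exists_linking
  exact ⟨linkingsOf R, l, hR.isSpBisim_linkingsOf, hl, hl1, hl2⟩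

/-- place bisimilarity implies structure-preserving bisimilarity. -/
theorem placeBisimilar_spBisimilar {S A : Type} [Fintype S] [Fintype A]
    [DecidableEq S] [DecidableEq A] (N : PetriNet S A)
    (m1 m2 : Multiset S) (h : PlaceBisimilar N m1 m2) :
    SpBisimilar N m1 m2 :=
  placeBisimilar_spBisimilar_general N m1 m2 h
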